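/- arXiv:2106.02866 — 2 statements merged into one kernel-verified Lean document; each statement's English description precedes it below -/
import Mathlib

section
/- Let X and Y be measurable spaces, P a probability measure on X × Y, n ≥ 1 a natural number, and f : X × Y → ℝ a measurable and bounded function. Then ENNReal.ofReal ( ∫ (x, y) ∂P, ∫ w ∂(Measure.pi (fun _ : Fin (n-1) => P.map Prod.snd)), Real.log ( Real.exp (f (x, y)) / ((1/n) * (Real.exp (f (x, y)) + ∑ j : Fin (n-1), Real.exp (f (x, w j)))) ) ) ≤ KL(P ‖ (P.map Prod.fst).prod (P.map Prod.snd)). -/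
/-!
Write `Q` for the product of the marginals of `P`, and
`g p w = exp (f p) / ((exp (f p) + ∑ j, exp (f (p.1, w j))) / (m + 1))` with `m = n - 1` negatives.
The Donsker–Varadhan inequality `∫ h ∂P ≤ ∫ llr P Q ∂P + log ∫ exp h ∂Q`
(`integral_le_integral_llr_add_log`), which is Gibbs' inequality for `P` and the tilt of `Q` by `h`,
is applied to `h p = ∫ log (g p w) ∂w`. By Jensen `exp (h p) ≤ ∫ g p w ∂w`, so it remains to see
that `∫ p, ∫ w, g p w` over `Q` and the negatives equals one. For fixed `x`, under `Q` the second
coordinate of the pair and the negatives are `m + 1` i.i.d. points `z i`; with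
`a y = exp (f (x, y))` the ratios `a (z i) / ∑ j, a (z j)` are exchangeable and sum to one, so each
has mean `1 / (m + 1)` (`integral_div_sum_pi`).
-/

open MeasureTheory ProbabilityTheory
open scoped ENNReal

open Classical in
/-- The Kullback–Leibler divergence valued in `[0, ∞]`. -/
noncomputable def klDiv {α : Type*} [MeasurableSpace α] (P Q : Measure α) : ℝ≥0∞ :=
  if P ≪ Q ∧ Integrable (llr P Q) P then ENNReal.ofReal (∫ a, llr P Q a ∂P) else ⊤

/-- The normalised contrastive ratio inside the logarithm of the InfoNCE objective, for the pair `p`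
and the `m` negatives `w`. -/
noncomputable def nceRatio {X Y : Type*} (f : X × Y → ℝ) (m : ℕ) (p : X × Y) (w : Fin m → Y) : ℝ :=
  Real.exp (f (p.1, p.2)) / (((1 : ℝ) / ((m + 1 : ℕ) : ℝ)) *
    (Real.exp (f (p.1, p.2)) + ∑ j : Fin m, Real.exp (f (p.1, w j))))

theorem nceRatio_pos {X Y : Type*} (f : X × Y → ℝ) (m : ℕ) (p : X × Y) (w : Fin m → Y) :
    0 < nceRatio f m p w := by
  unfold nceRatio
  have : 0 ≤ ∑ j : Fin m, Real.exp (f (p.1, w j)) := Finset.sum_nonneg fun _ _ => (Real.exp_pos _).le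
  have := Real.exp_pos (f (p.1, p.2))
  positivity

theorem measurable_nceRatio {X Y : Type*} [MeasurableSpace X] [MeasurableSpace Y] {f : X × Y → ℝ}
    (hf : Measurable f) (m : ℕ) :
    Measurable (fun q : (X × Y) × (Fin m → Y) => nceRatio f m q.1 q.2) := by
  unfold nceRatio
  fun_prop

/-- Numerator and denominator (an average) both lie between `exp (-C)` and `exp C`. -/
theorem abs_log_nceRatio_le {X Y : Type*} {f : X × Y → ℝ} {C : ℝ} (hC : ∀ p, |f p| ≤ C) (m : ℕ)
    (p : X × Y) (w : Fin m → Y) : |Real.log (nceRatio f m p w)| ≤ 2 * C := by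
  have hlo : ∀ q, Real.exp (-C) ≤ Real.exp (f q) := fun q => Real.exp_le_exp.2 (abs_le.1 (hC q)).1
  have hhi : ∀ q, Real.exp (f q) ≤ Real.exp C := fun q => Real.exp_le_exp.2 (abs_le.1 (hC q)).2
  have hs1 : (m : ℝ) * Real.exp (-C) ≤ ∑ j : Fin m, Real.exp (f (p.1, w j)) := by
    simpa using Finset.card_nsmul_le_sum Finset.univ (fun j : Fin m => Real.exp (f (p.1, w j))) _
      (fun j _ => hlo _)
  have hs2 : ∑ j : Fin m, Real.exp (f (p.1, w j)) ≤ (m : ℝ) * Real.exp C := by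
    simpa using Finset.sum_le_card_nsmul Finset.univ (fun j : Fin m => Real.exp (f (p.1, w j))) _
      (fun j _ => hhi _)
  set A := ((1 : ℝ) / ((m + 1 : ℕ) : ℝ)) *
    (Real.exp (f (p.1, p.2)) + ∑ j : Fin m, Real.exp (f (p.1, w j))) with hA
  have hA1 : Real.exp (-C) ≤ A := by
    rw [hA, one_div_mul_eq_div, le_div_iff₀ (by positivity)]
    push_cast
    linarith [hlo (p.1, p.2)]
  have hA2 : A ≤ Real.exp C := by
    rw [hA, one_div_mul_eq_div, div_le_iff₀ (by positivity)]
    push_cast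
    linarith [hhi (p.1, p.2)]
  have hApos : 0 < A := (Real.exp_pos _).trans_le hA1
  have h1 : -C ≤ Real.log A := (Real.le_log_iff_exp_le hApos).2 hA1
  have h2 : Real.log A ≤ C := (Real.log_le_iff_le_exp hApos).2 hA2
  have h3 := abs_le.1 (hC (p.1, p.2))
  have : Real.log (nceRatio f m p w) = f (p.1, p.2) - Real.log A := by
    rw [nceRatio, ← hA, Real.log_div (Real.exp_pos _).ne' hApos.ne', Real.log_exp]
  rw [this, abs_le]
  constructor <;> linarith

/-- Exchangeability: the shares `a (z i) / ∑ j, a (z j)` of i.i.d. points have equal means, and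
they sum to one. -/
theorem integral_div_sum_pi {Y : Type*} [MeasurableSpace Y] (ν : Measure Y) [IsProbabilityMeasure ν]
    (m : ℕ) {a : Y → ℝ} (ha : Measurable a) (hpos : ∀ y, 0 < a y) (i : Fin (m + 1)) :
    ∫ z, a (z i) / ∑ j, a (z j) ∂(Measure.pi fun _ : Fin (m + 1) => ν) = 1 / ((m + 1 : ℕ) : ℝ) := by
  set π := Measure.pi fun _ : Fin (m + 1) => ν
  have hsum : ∀ z : Fin (m + 1) → Y, 0 < ∑ j, a (z j) := fun z =>
    Finset.sum_pos (fun j _ => hpos _) Finset.univ_nonempty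
  have hint : ∀ k : Fin (m + 1), Integrable (fun z => a (z k) / ∑ j, a (z j)) π := by
    intro k
    refine Integrable.of_bound (C := 1)
      (by fun_prop : Measurable fun z : Fin (m + 1) → Y =>
        a (z k) / ∑ j, a (z j)).aestronglyMeasurable (ae_of_all _ fun z => ?_)
    rw [Real.norm_of_nonneg (div_nonneg (hpos _).le (hsum z).le)]
    exact div_le_one_of_le₀ (Finset.single_le_sum (f := fun j => a (z j))
      (fun j _ => (hpos _).le) (Finset.mem_univ k)) (hsum z).le
  have hsymm : ∀ k : Fin (m + 1), ∫ z, a (z k) / ∑ j, a (z j) ∂π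
      = ∫ z, a (z i) / ∑ j, a (z j) ∂π := by
    intro k
    have hmp := measurePreserving_piCongrLeft (fun _ : Fin (m + 1) => ν) (Equiv.swap i k)
    rw [← hmp.integral_comp']
    refine integral_congr_ae (ae_of_all _ fun z => ?_)
    have hz : ∀ l, (MeasurableEquiv.piCongrLeft (fun _ : Fin (m + 1) => Y) (Equiv.swap i k)) z l
        = z (Equiv.swap i k l) := by
      intro l
      have := MeasurableEquiv.piCongrLeft_apply_apply (β := fun _ : Fin (m + 1) => Y)
        (Equiv.swap i k) z (Equiv.swap i k l)
      simpa using this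
    simp only [hz, Equiv.swap_apply_right]
    rw [Equiv.sum_comp (Equiv.swap i k) (fun j => a (z j))]
  have htot : ∑ k : Fin (m + 1), ∫ z, a (z k) / ∑ j, a (z j) ∂π = 1 := by
    rw [← integral_finsetSum _ fun k _ => hint k]
    simp_rw [← Finset.sum_div, div_self (hsum _).ne']
    simp
  simp_rw [hsymm] at htot
  rw [Finset.sum_const, Finset.card_univ, Fintype.card_fin, nsmul_eq_mul] at htot
  rw [eq_div_iff (by positivity), mul_comm]
  exact htot

/-- Donsker–Varadhan for bounded test functions: Gibbs' inequality for `P` against the tilt of `Q`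
by `h`. -/
theorem integral_le_integral_llr_add_log {α : Type*} [MeasurableSpace α] (P Q : Measure α)
    [IsProbabilityMeasure P] [IsProbabilityMeasure Q] (hPQ : P ≪ Q) (hllr : Integrable (llr P Q) P)
    {h : α → ℝ} (hm : Measurable h) {C : ℝ} (hC : ∀ p, |h p| ≤ C) :
    ∫ p, h p ∂P ≤ ∫ p, llr P Q p ∂P + Real.log (∫ p, Real.exp (h p) ∂Q) := by
  have hP : Integrable h P := Integrable.of_bound (C := C) (by fun_prop) (ae_of_all _ hC)
  have hQ : Integrable (fun p => Real.exp (h p)) Q :=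
    Integrable.of_bound (C := Real.exp C) (by fun_prop) (ae_of_all _ fun p => by
      rw [Real.norm_of_nonneg (Real.exp_pos _).le]
      exact Real.exp_le_exp.2 (abs_le.1 (hC p)).2)
  have := isProbabilityMeasure_tilted hQ
  have h0 := InformationTheory.integral_llr_add_sub_measure_univ_nonneg
    (hPQ.trans (absolutelyContinuous_tilted hQ)) (integrable_llr_tilted_right hPQ hP hllr hQ)
  rw [integral_llr_tilted_right hPQ hP hQ hllr] at h0
  simp only [probReal_univ] at h0
  linarith

/-- Equation (1): the finite-sample InfoNCE objective with negatives drawn i.i.d. from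
the second marginal of `P` lower-bounds the mutual information
`KL(P ‖ (P.map Prod.fst).prod (P.map Prod.snd))`. -/
theorem stmt_5 {X Y : Type*} [MeasurableSpace X] [MeasurableSpace Y]
    (P : Measure (X × Y)) [IsProbabilityMeasure P]
    (n : ℕ) (hn : 1 ≤ n)
    (f : X × Y → ℝ) (hf : Measurable f) (hb : ∃ C, ∀ p, |f p| ≤ C) :
    ENNReal.ofReal
      (∫ p, (∫ w, Real.log (Real.exp (f (p.1, p.2)) /
          (((1 : ℝ) / n) *
            (Real.exp (f (p.1, p.2)) + ∑ j : Fin (n - 1), Real.exp (f (p.1, w j)))))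
        ∂(Measure.pi (fun _ : Fin (n - 1) => P.map Prod.snd))) ∂P)
      ≤ klDiv P ((P.map Prod.fst).prod (P.map Prod.snd)) := by
  obtain ⟨C, hC⟩ := hb
  obtain ⟨m, rfl⟩ : ∃ m, n = m + 1 := ⟨n - 1, by omega⟩
  change ENNReal.ofReal (∫ p, (∫ w, Real.log (nceRatio f m p w)
    ∂(Measure.pi (fun _ : Fin m => P.map Prod.snd))) ∂P) ≤ _
  have : IsProbabilityMeasure (P.map Prod.fst) :=
    Measure.isProbabilityMeasure_map measurable_fst.aemeasurable
  have : IsProbabilityMeasure (P.map Prod.snd) :=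
    Measure.isProbabilityMeasure_map measurable_snd.aemeasurable
  unfold klDiv
  split_ifs with hkl
  swap
  · exact le_top
  refine ENNReal.ofReal_le_ofReal ?_
  set μ := P.map Prod.fst
  set ν := P.map Prod.snd
  set π := Measure.pi (fun _ : Fin m => ν) with hπ
  have hg := measurable_nceRatio hf m
  have hg' : ∀ p, Measurable (nceRatio f m p) := fun p => hg.comp measurable_prodMk_left
  have hgle : ∀ p w, nceRatio f m p w ≤ Real.exp (2 * C) := fun p w =>
    (Real.log_le_iff_le_exp (nceRatio_pos f m p w)).1 (abs_le.1 (abs_log_nceRatio_le hC m p w)).2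
  have hgint : ∀ p, Integrable (nceRatio f m p) π := fun p =>
    Integrable.of_bound (C := Real.exp (2 * C)) (hg' p).aestronglyMeasurable (ae_of_all _ fun w => by
      rw [Real.norm_of_nonneg (nceRatio_pos f m p w).le]
      exact hgle p w)
  have hlogint : ∀ p, Integrable (fun w => Real.log (nceRatio f m p w)) π := fun p =>
    Integrable.of_bound (C := 2 * C) (hg' p).log.aestronglyMeasurable
      (ae_of_all _ fun w => abs_log_nceRatio_le hC m p w)
  have hhm : Measurable (fun p => ∫ w, Real.log (nceRatio f m p w) ∂π) :=
    (hg.log.stronglyMeasurable.integral_prod_right').measurable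
  have hGm : Measurable (fun p => ∫ w, nceRatio f m p w ∂π) :=
    (hg.stronglyMeasurable.integral_prod_right').measurable
  have hhC : ∀ p, |∫ w, Real.log (nceRatio f m p w) ∂π| ≤ 2 * C := fun p => by
    simpa using norm_integral_le_of_norm_le_const (μ := π)
      (f := fun w => Real.log (nceRatio f m p w)) (C := 2 * C) (ae_of_all _ fun w => abs_log_nceRatio_le hC m p w)
  have hDV := integral_le_integral_llr_add_log P (μ.prod ν) hkl.1 hkl.2 hhm hhC
  have hjensen : ∀ p, Real.exp (∫ w, Real.log (nceRatio f m p w) ∂π)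
      ≤ ∫ w, nceRatio f m p w ∂π := by
    intro p
    have hexp : ∀ w, Real.exp (Real.log (nceRatio f m p w)) = nceRatio f m p w := fun w =>
      Real.exp_log (nceRatio_pos f m p w)
    have := convexOn_exp.map_integral_le (μ := π) (f := fun w => Real.log (nceRatio f m p w))
      Real.continuous_exp.continuousOn isClosed_univ (by simp) (hlogint p)
      (by simpa only [Function.comp_def, hexp] using hgint p)
    simpa only [hexp] using this
  have hGint : Integrable (fun p => ∫ w, nceRatio f m p w ∂π) (μ.prod ν) :=
    Integrable.of_bound (C := Real.exp (2 * C)) hGm.aestronglyMeasurable (ae_of_all _ fun p => by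
      simpa using norm_integral_le_of_norm_le_const (μ := π) (f := nceRatio f m p)
        (C := Real.exp (2 * C)) (ae_of_all _ fun w => by
          rw [Real.norm_of_nonneg (nceRatio_pos f m p w).le]
          exact hgle p w))
  have hone : ∫ p, ∫ w, nceRatio f m p w ∂π ∂(μ.prod ν) = 1 := by
    rw [integral_prod _ hGint]
    have hx : ∀ x, ∫ y, ∫ w, nceRatio f m (x, y) w ∂π ∂ν = 1 := by
      intro x
      have hxint : Integrable (fun q : Y × (Fin m → Y) => nceRatio f m (x, q.1) q.2) (ν.prod π) :=
        Integrable.of_bound (C := Real.exp (2 * C))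
          (hg.comp (by fun_prop : Measurable fun q : Y × (Fin m → Y) => ((x, q.1), q.2))).aestronglyMeasurable
          (ae_of_all _ fun q => by
            rw [Real.norm_of_nonneg (nceRatio_pos f m _ _).le]
            exact hgle _ _)
      rw [← integral_prod _ hxint]
      have hmp := measurePreserving_piFinSuccAbove (fun _ : Fin (m + 1) => ν) 0
      have hcongr : ∀ z : Fin (m + 1) → Y,
          nceRatio f m (x, (MeasurableEquiv.piFinSuccAbove (fun _ => Y) 0 z).1)
            (MeasurableEquiv.piFinSuccAbove (fun _ => Y) 0 z).2
          = ((m + 1 : ℕ) : ℝ) * (Real.exp (f (x, z 0)) / ∑ j, Real.exp (f (x, z j))) := by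
        intro z
        rw [Fin.sum_univ_succ]
        simp only [nceRatio, MeasurableEquiv.piFinSuccAbove_apply, Fin.insertNthEquiv_zero,
          Fin.consEquiv_symm_apply, Fin.tail]
        have : 0 ≤ ∑ j : Fin m, Real.exp (f (x, z j.succ)) :=
          Finset.sum_nonneg fun _ _ => (Real.exp_pos _).le
        have := Real.exp_pos (f (x, z 0))
        field_simp
      rw [← hmp.integral_comp' (g := fun q : Y × (Fin m → Y) => nceRatio f m (x, q.1) q.2)]
      simp_rw [hcongr]
      rw [integral_const_mul, integral_div_sum_pi ν m (a := fun y => Real.exp (f (x, y)))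
        (by fun_prop) (fun _ => Real.exp_pos _) 0]
      field_simp
    simp [hx]
  have hle : ∫ p, Real.exp (∫ w, Real.log (nceRatio f m p w) ∂π) ∂(μ.prod ν) ≤ 1 := by
    rw [← hone]
    exact integral_mono_of_nonneg (ae_of_all _ fun p => (Real.exp_pos _).le) hGint
      (ae_of_all _ hjensen)
  have hlog := Real.log_nonpos (integral_nonneg fun p => (Real.exp_pos _).le) hle
  linarith
end

section
/- Let Z be a measurable space and X, Y standard Borel spaces; let π be a probability measure on Z; let κ : Kernel Z (X × Y) be a Markov kernel and η : Kernel Z (X × Y) a Markov kernel with η z = ((κ z).map Prod.fst).prod ((κ z).map Prod.snd) for every z. If ∫⁻ z, KL(κ z ‖ η z) ∂π = 0 (i.e., MI(X;Y|Z) = 0, conditional independence of the two coordinates given Z), then π.bind (fun z => κ z) = π.bind (fun z => η z) (i.e., P_{X,Y} = E_{z∼π}[P_{X|Z=z} ⊗ P_{Y|Z=z}], weak conditional independence), and in particular Weak-MI(X;Y|Z) = KL(π.bind κ ‖ π.bind η) = 0. -/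
/-!
The divergence `klDiv (κ z) (η z)` vanishes only when `κ z = η z`, so vanishing of the integral
should give `κ z = η z` for `π`-almost every `z`, hence equal mixtures. The delicate point is
measurability: `∫⁻` is a lower integral, so a non-measurable function with zero integral need not
vanish almost everywhere. Since `X × Y` is countably generated, `Kernel.rnDeriv` supplies a jointly
measurable density, and `z ↦ ∫⁻ x, klFun (dκ/dη z x) ∂(η z)` is a measurable lower bound for the
divergence. When this bound is zero, the density is `1` almost everywhere, so `η z ≤ κ z`, and two
comparable probability measures agree.
-/

open MeasureTheory ProbabilityTheory
open scoped ENNReal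

/-- For probability measures, the mass correction in Mathlib's divergence cancels. -/
lemma klDiv_eq_mathlib {α : Type*} [MeasurableSpace α] (P Q : Measure α)
    [IsProbabilityMeasure P] [IsProbabilityMeasure Q] :
    klDiv P Q = InformationTheory.klDiv P Q := by
  classical
  simp [klDiv, InformationTheory.klDiv]

/-- A density equal to `1` makes the absolutely continuous part of `P` equal to `Q`; the singular
part is then zero because the total masses agree. -/
lemma eq_of_rnDeriv_eq_one {α : Type*} [MeasurableSpace α] (P Q : Measure α)
    [IsProbabilityMeasure P] [IsProbabilityMeasure Q]
    (h : P.rnDeriv Q =ᵐ[Q] 1) : P = Q := by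
  have hle : Q ≤ P := by
    calc Q = Q.withDensity (P.rnDeriv Q) := by rw [withDensity_congr_ae h, withDensity_one]
      _ ≤ P := Measure.withDensity_rnDeriv_le P Q
  exact (Measure.eq_of_le_of_measure_univ_eq hle (by simp)).symm

lemma ae_eq_of_lintegral_klDiv_eq_zero {Z W : Type*} [MeasurableSpace Z] [MeasurableSpace W]
    [MeasurableSpace.CountablyGenerated W] (π : Measure Z)
    (κ η : Kernel Z W) [IsMarkovKernel κ] [IsMarkovKernel η]
    (hMI : ∫⁻ z, klDiv (κ z) (η z) ∂π = 0) : ∀ᵐ z ∂π, κ z = η z := by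
  let f : Z → W → ℝ≥0∞ := fun z x =>
    ENNReal.ofReal (InformationTheory.klFun (κ.rnDeriv η z x).toReal)
  have hf : Measurable (Function.uncurry f) :=
    (InformationTheory.measurable_klFun.comp
      (Kernel.measurable_rnDeriv κ η).ennreal_toReal).ennreal_ofReal
  have hle : ∀ z, ∫⁻ x, f z x ∂(η z) ≤ klDiv (κ z) (η z) := by
    intro z
    rw [klDiv_eq_mathlib, InformationTheory.klDiv_eq_lintegral_klFun]
    split_ifs
    · refine le_of_eq (lintegral_congr_ae ?_)
      filter_upwards [Kernel.rnDeriv_eq_rnDeriv_measure (κ := κ) (η := η) (a := z)] with x hx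
      simp only [f, hx]
    · exact le_top
  have h0 : ∫⁻ z, ∫⁻ x, f z x ∂(η z) ∂π = 0 :=
    le_antisymm ((lintegral_mono hle).trans hMI.le) zero_le
  rw [lintegral_eq_zero_iff hf.lintegral_kernel_prod_right] at h0
  filter_upwards [h0] with z hz
  have hz' : ∫⁻ x, f z x ∂(η z) = 0 := hz
  rw [lintegral_eq_zero_iff (show Measurable (f z) from hf.comp measurable_prodMk_left)] at hz'
  apply eq_of_rnDeriv_eq_one
  filter_upwards [hz', Kernel.rnDeriv_eq_rnDeriv_measure (κ := κ) (η := η) (a := z)] with x hx hx'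
  have h1 : InformationTheory.klFun (κ.rnDeriv η z x).toReal = 0 :=
    le_antisymm (ENNReal.ofReal_eq_zero.mp hx)
      (InformationTheory.klFun_nonneg ENNReal.toReal_nonneg)
  rw [InformationTheory.klFun_eq_zero_iff ENNReal.toReal_nonneg, ENNReal.toReal_eq_one_iff] at h1
  rw [← hx', h1, Pi.one_apply]

/-- MI(X;Y|Z) = 0 (conditional independence) implies weak conditional independence, and
in particular Weak-MI(X;Y|Z) = 0. -/
theorem stmt_10 {Z X Y : Type*} [MeasurableSpace Z]
    [MeasurableSpace X] [StandardBorelSpace X] [MeasurableSpace Y] [StandardBorelSpace Y]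
    (π : Measure Z) [IsProbabilityMeasure π]
    (κ η : Kernel Z (X × Y)) [IsMarkovKernel κ] [IsMarkovKernel η]
    (hη : ∀ z, η z = ((κ z).map Prod.fst).prod ((κ z).map Prod.snd))
    (hMI : ∫⁻ z, klDiv (κ z) (η z) ∂π = 0) :
    π.bind (fun z => κ z) = π.bind (fun z => η z) ∧
      klDiv (π.bind (fun z => κ z)) (π.bind (fun z => η z)) = 0 := by
  have h : π.bind (fun z => κ z) = π.bind (fun z => η z) :=
    Measure.bind_congr_right (ae_eq_of_lintegral_klDiv_eq_zero π κ η hMI)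
  refine ⟨h, ?_⟩
  have : IsProbabilityMeasure (π.bind (fun z => η z)) :=
    inferInstanceAs (IsProbabilityMeasure (π.bind η))
  rw [h, klDiv_eq_mathlib, InformationTheory.klDiv_self]
end
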